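/- Fix integers 1 ≤ k ≤ n and 1 ≤ j ≤ k, and let I_j = { s ∈ [n] : s ≡ j (mod k) }, with m = |I_j|. Then the number of tuples γ ∈ I_j^m such that, under the k-vacillating parking rule on a street with spots 1,…,n, all m cars with preferences γ park and every car parks in a spot belonging to I_j, equals |VPF_m|, the number of 1-vacillating parking functions of length m. -/

import Mathlib

/-- One car with (1-indexed) preference `p` attempts to park on a one-way street with
spots `1,…,n` under the `k`-vacillating rule, given the set `occ` of occupied spots:
it parks in spot `p` if unoccupied; otherwise in spot `p - k` if `p - k ≥ 1` and it is
unoccupied; otherwise in spot `p + k` if `p + k ≤ n` and it is unoccupied; otherwise it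
fails to park (`none`). -/
def parkStep (n k : ℕ) (occ : Finset ℕ) (p : ℕ) : Option ℕ :=
  if p ∉ occ then some p
  else if k < p ∧ p - k ∉ occ then some (p - k)
  else if p + k ≤ n ∧ p + k ∉ occ then some (p + k)
  else none

/-- Park the cars whose preference list is given, in order, under the `k`-vacillating
rule on a street with spots `1,…,n`, starting from occupied set `occ`.  Returns the list
of spots occupied by the cars (in the order the cars arrive), or `none` if some car
fails to park. -/
def parkAssign (n k : ℕ) (occ : Finset ℕ) : List ℕ → Option (List ℕ)
  | [] => some []
  | p :: ps =>
    match parkStep n k occ p with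
    | none => none
    | some s => (parkAssign n k (insert s occ) ps).map (s :: ·)

/-- The 1-indexed preference list in `[n]^m` associated to `α : Fin m → Fin n`
(car `i+1` prefers spot `α i + 1`). -/
def prefList {m n : ℕ} (α : Fin m → Fin n) : List ℕ :=
  List.ofFn fun i => (α i : ℕ) + 1

/-- The set of `k`-vacillating parking functions of length `n`:
preference lists in `[n]^n` (encoded as `Fin n → Fin n`) for which all `n` cars park. -/
def VPFk (n k : ℕ) : Finset (Fin n → Fin n) :=
  Finset.univ.filter fun α => (parkAssign n k ∅ (prefList α)).isSome

/-- The set of vacillating parking functions of length `n` (the case `k = 1`). -/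
def VPF (n : ℕ) : Finset (Fin n → Fin n) := VPFk n 1

/-- `I_j = { s ∈ [n] : s ≡ j (mod k) }`. -/
def Ij (n k j : ℕ) : Finset ℕ :=
  (Finset.Icc 1 n).filter fun s => s % k = j % k

/-- The `p`-th spot (1-indexed) of the residue class of `j` modulo `k`. -/
def classSpot (k j p : ℕ) : ℕ := j + (p - 1) * k

theorem classSpot_succ (k j p : ℕ) : classSpot k j (p + 1) = j + p * k := rfl

theorem classSpot_inj {k j p q : ℕ} (hk : 1 ≤ k) (hp : 1 ≤ p) (hq : 1 ≤ q) :
    classSpot k j p = classSpot k j q ↔ p = q := by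
  obtain ⟨p, rfl⟩ := Nat.exists_eq_add_of_le' hp
  obtain ⟨q, rfl⟩ := Nat.exists_eq_add_of_le' hq
  simp only [classSpot_succ, Nat.add_left_cancel_iff, Nat.add_right_cancel_iff]
  exact Nat.mul_left_inj (by omega)

theorem classSpot_mem_image {k j p : ℕ} {occ : Finset ℕ} (hk : 1 ≤ k) (hp : 1 ≤ p)
    (hocc : ∀ s ∈ occ, 1 ≤ s) : classSpot k j p ∈ occ.image (classSpot k j) ↔ p ∈ occ := by
  rw [Finset.mem_image]
  refine ⟨?_, fun h => ⟨p, h, rfl⟩⟩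
  rintro ⟨q, hq, h⟩
  rwa [← (classSpot_inj hk (hocc q hq) hp).1 h]

theorem Ij_eq_image {n k j : ℕ} (hk : 1 ≤ k) (hkn : k ≤ n) (hj : 1 ≤ j) (hjk : j ≤ k) :
    Ij n k j = (Finset.Icc 1 ((n - j) / k + 1)).image (classSpot k j) := by
  ext s
  simp only [Ij, Finset.mem_filter, Finset.mem_Icc, Finset.mem_image]
  constructor
  · rintro ⟨⟨hs, hsn⟩, hmod⟩
    have hjs : j ≤ s := by
      by_contra! hlt
      rw [Nat.mod_eq_of_lt (by omega : s < k)] at hmod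
      rcases hjk.lt_or_eq with h | rfl
      · rw [Nat.mod_eq_of_lt h] at hmod
        omega
      · rw [Nat.mod_self] at hmod
        omega
    obtain ⟨q, hq⟩ := (Nat.modEq_iff_dvd' hjs).1 (Eq.symm hmod)
    refine ⟨q + 1, ⟨by omega, ?_⟩, ?_⟩
    · rw [Nat.add_le_add_iff_right, Nat.le_div_iff_mul_le (by omega), mul_comm]
      omega
    · rw [classSpot_succ, mul_comm]
      omega
  · rintro ⟨p, ⟨hp, hpm⟩, rfl⟩
    obtain ⟨q, rfl⟩ := Nat.exists_eq_add_of_le' hp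
    rw [Nat.add_le_add_iff_right, Nat.le_div_iff_mul_le (by omega)] at hpm
    rw [classSpot_succ]
    exact ⟨by omega, Nat.add_mul_mod_self_right j q k⟩

theorem card_Ij {n k j : ℕ} (hk : 1 ≤ k) (hkn : k ≤ n) (hj : 1 ≤ j) (hjk : j ≤ k) :
    (Ij n k j).card = (n - j) / k + 1 := by
  rw [Ij_eq_image hk hkn hj hjk, Finset.card_image_of_injOn, Nat.card_Icc, Nat.add_sub_cancel]
  intro p hp q hq h
  exact (classSpot_inj hk (Finset.mem_Icc.1 hp).1 (Finset.mem_Icc.1 hq).1).1 h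

theorem parkStep_mem_Icc {n k p s : ℕ} {occ : Finset ℕ} (hp : p ∈ Finset.Icc 1 n)
    (h : parkStep n k occ p = some s) : s ∈ Finset.Icc 1 n := by
  rw [Finset.mem_Icc] at *
  unfold parkStep at h
  split_ifs at h <;> simp only [Option.some.injEq] at h <;> omega

theorem parkAssign_mem_Icc {n k : ℕ} {l r : List ℕ} {occ : Finset ℕ}
    (hl : ∀ p ∈ l, p ∈ Finset.Icc 1 n) (h : parkAssign n k occ l = some r) :
    ∀ s ∈ r, s ∈ Finset.Icc 1 n := by
  induction l generalizing occ r with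
  | nil =>
    obtain rfl : [] = r := by simpa [parkAssign] using h
    simp
  | cons p ps ih =>
    rw [List.forall_mem_cons] at hl
    rw [parkAssign] at h
    split at h
    · simp at h
    · next s hs =>
      obtain ⟨t, ht, rfl⟩ := Option.map_eq_some_iff.1 h
      exact List.forall_mem_cons.2 ⟨parkStep_mem_Icc hl.1 hs, ih hl.2 ht⟩

/-- On the residue class of `j` modulo `k`, the `k`-vacillating rule is the `1`-vacillating rule. -/
theorem parkStep_image_classSpot {n k j p : ℕ} {occ : Finset ℕ} (hk : 1 ≤ k) (hkn : k ≤ n)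
    (hj : 1 ≤ j) (hjk : j ≤ k) (hp : 1 ≤ p) (hocc : ∀ s ∈ occ, 1 ≤ s) :
    parkStep n k (occ.image (classSpot k j)) (classSpot k j p) =
      (parkStep ((n - j) / k + 1) 1 occ p).map (classSpot k j) := by
  have hadd : classSpot k j p + k = classSpot k j (p + 1) := by
    obtain ⟨q, rfl⟩ := Nat.exists_eq_add_of_le' hp
    simp only [classSpot_succ]
    ring
  have hle : classSpot k j (p + 1) ≤ n ↔ p + 1 ≤ (n - j) / k + 1 := by
    rw [Nat.add_le_add_iff_right, Nat.le_div_iff_mul_le (by omega), classSpot_succ]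
    omega
  have hsub : 1 < p → classSpot k j p - k = classSpot k j (p - 1) ∧ k < classSpot k j p := by
    intro h
    obtain ⟨q, rfl⟩ := Nat.exists_eq_add_of_le' h
    simp only [classSpot, Nat.succ_eq_add_one, Nat.add_sub_cancel, ← Nat.add_assoc, add_mul]
    omega
  have hback : (k < classSpot k j p ∧ classSpot k j p - k ∉ occ.image (classSpot k j)) ↔
      (1 < p ∧ p - 1 ∉ occ) := by
    by_cases h : 1 < p
    · rw [(hsub h).1, classSpot_mem_image hk (by omega) hocc]
      exact and_congr_left fun _ => iff_of_true (hsub h).2 h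
    · obtain rfl : p = 1 := by omega
      simp [classSpot, hjk]
  unfold parkStep
  simp only [hback, hadd, hle, classSpot_mem_image hk hp hocc,
    classSpot_mem_image hk (Nat.le_add_left 1 p) hocc]
  split_ifs with h₁ h₂
  · rw [(hsub h₂.1).1, Option.map_some]
  · rfl
  · rfl
  · rfl

theorem parkStep_pos {n k p s : ℕ} {occ : Finset ℕ} (hp : 1 ≤ p)
    (h : parkStep n k occ p = some s) : 1 ≤ s := by
  unfold parkStep at h
  split_ifs at h <;> simp only [Option.some.injEq] at h <;> omega

theorem parkAssign_image_classSpot {n k j : ℕ} {l : List ℕ} {occ : Finset ℕ} (hk : 1 ≤ k)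
    (hkn : k ≤ n) (hj : 1 ≤ j) (hjk : j ≤ k) (hl : ∀ p ∈ l, 1 ≤ p) (hocc : ∀ s ∈ occ, 1 ≤ s) :
    parkAssign n k (occ.image (classSpot k j)) (l.map (classSpot k j)) =
      (parkAssign ((n - j) / k + 1) 1 occ l).map (List.map (classSpot k j)) := by
  induction l generalizing occ with
  | nil => rfl
  | cons p ps ih =>
    rw [List.forall_mem_cons] at hl
    rw [List.map_cons, parkAssign, parkAssign,
      parkStep_image_classSpot hk hkn hj hjk hl.1 hocc]
    cases h : parkStep ((n - j) / k + 1) 1 occ p with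
    | none => rfl
    | some s =>
      have hocc' : ∀ t ∈ insert s occ, 1 ≤ t :=
        Finset.forall_mem_insert .. |>.2 ⟨parkStep_pos hl.1 h, hocc⟩
      simp only [Option.map_some]
      rw [← Finset.image_insert, ih hl.2 hocc', Option.map_map, Option.map_map]
      rfl

theorem prefList_mem_Icc {m n : ℕ} (α : Fin m → Fin n) : ∀ p ∈ prefList α, p ∈ Finset.Icc 1 n := by
  intro p hp
  obtain ⟨i, rfl⟩ := List.mem_ofFn.1 hp
  exact Finset.mem_Icc.2 ⟨by omega, (α i).isLt⟩

/-- For `1 ≤ j ≤ k ≤ n` and `m = |I_j|`, the number of tuples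
`γ ∈ I_j^m` (encoded as `γ : Fin m → Fin n` with all 1-indexed preferences in `I_j`)
such that under the `k`-vacillating rule on a street with spots `1,…,n` all `m` cars
park and every car parks in a spot of `I_j`, equals `|VPF_m|`. -/
theorem card_park_in_Ij (n k j : ℕ) (hk : 1 ≤ k) (hkn : k ≤ n)
    (hj : 1 ≤ j) (hjk : j ≤ k) (m : ℕ) (hm : m = (Ij n k j).card) :
    (Finset.univ.filter fun γ : Fin m → Fin n =>
        (∀ i : Fin m, ((γ i : ℕ) + 1) ∈ Ij n k j) ∧
          (parkAssign n k ∅ (prefList γ)).isSome ∧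
          ∀ s ∈ (parkAssign n k ∅ (prefList γ)).getD [], s ∈ Ij n k j).card
      = (VPF m).card := by
  rw [card_Ij hk hkn hj hjk] at hm
  have hIj : Ij n k j = (Finset.Icc 1 m).image (classSpot k j) := by
    rw [hm, Ij_eq_image hk hkn hj hjk]
  have hmem (a : Fin m) : classSpot k j (a + 1) ∈ Ij n k j := by
    rw [hIj]
    exact Finset.mem_image_of_mem _ (Finset.mem_Icc.2 ⟨by omega, a.isLt⟩)
  have hbound (a : Fin m) : 1 ≤ classSpot k j (a + 1) ∧ classSpot k j (a + 1) ≤ n :=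
    Finset.mem_Icc.1 (Finset.mem_filter.1 (hmem a)).1
  let e : Fin m → Fin n := fun a =>
    ⟨classSpot k j (a + 1) - 1, by have := hbound a; omega⟩
  have he (a : Fin m) : (e a : ℕ) + 1 = classSpot k j (a + 1) :=
    Nat.sub_add_cancel (hbound a).1
  have heinj : Function.Injective e := by
    intro a b hab
    have h : classSpot k j (a + 1) = classSpot k j (b + 1) := by rw [← he, ← he, hab]
    exact Fin.ext (Nat.succ_injective ((classSpot_inj hk (by omega) (by omega)).1 h))
  have hpark (α : Fin m → Fin m) : parkAssign n k ∅ (prefList (e ∘ α)) =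
      (parkAssign m 1 ∅ (prefList α)).map (List.map (classSpot k j)) := by
    have hlist : prefList (e ∘ α) = (prefList α).map (classSpot k j) := by
      simp only [prefList, List.map_ofFn]
      exact congrArg List.ofFn (funext fun i => he (α i))
    have h := parkAssign_image_classSpot (occ := ∅) hk hkn hj hjk
      (fun p hp => (Finset.mem_Icc.1 (prefList_mem_Icc α p hp)).1) (by simp)
    rwa [Finset.image_empty, ← hlist, ← hm] at h
  symm
  refine Finset.card_bij (fun α _ => e ∘ α) ?_ (fun α _ β _ h => heinj.comp_left h) ?_
  · intro α hα
    obtain ⟨r, hr⟩ := Option.isSome_iff_exists.1 (Finset.mem_filter.1 hα).2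
    refine Finset.mem_filter.2 ⟨Finset.mem_univ _, fun i => ?_, ?_, ?_⟩
    · rw [Function.comp_apply, he]
      exact hmem (α i)
    · rw [hpark, hr]
      rfl
    · rw [hpark, hr, Option.map_some, Option.getD_some, List.forall_mem_map, hIj]
      exact fun s hs => Finset.mem_image_of_mem _
        (parkAssign_mem_Icc (prefList_mem_Icc α) hr s hs)
  · intro γ hγ
    obtain ⟨-, hγI, hγp, -⟩ := Finset.mem_filter.1 hγ
    have hex (i : Fin m) : ∃ a : Fin m, e a = γ i := by
      have h := hγI i
      rw [hIj, Finset.mem_image] at h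
      obtain ⟨p, hp, hpi⟩ := h
      obtain ⟨hp1, hpm⟩ := Finset.mem_Icc.1 hp
      obtain ⟨q, rfl⟩ := Nat.exists_eq_add_of_le' hp1
      exact ⟨⟨q, hpm⟩, Fin.ext (Nat.succ_injective ((he _).trans hpi))⟩
    choose α hα using hex
    obtain rfl : e ∘ α = γ := funext hα
    refine ⟨α, Finset.mem_filter.2 ⟨Finset.mem_univ _, ?_⟩, rfl⟩
    rwa [hpark, Option.isSome_map] at hγp
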